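/- arXiv:math/9809017 — 2 statements merged into one kernel-verified Lean document; each statement's English description precedes it below -/
import Mathlib

section
/- Let φ₀ : M → C be a mapping and φ̃ : F → C its unique linear extension with φ̃(1) = 1 and φ̃(xy) = (ξ̃_{x₍₁₎} · φ̃(y)) · φ̃(x₍₂₎) for all x, y ∈ F. If (π ⊗ φ̃)(Δ̃(r)) = 0 in U ⊗ C for every r ∈ R, then φ̃ vanishes on the two-sided ideal ⟨R⟩ = ker π, so there exists a unique linear map φ' : U → C with φ̃ = φ' ∘ π; moreover φ'(1) = 1 and φ' satisfies the cocycle condition φ'(xy) = (ξ_{x₍₁₎} · φ'(y)) · φ'(x₍₂₎) for all x, y ∈ U. -/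
open scoped TensorProduct

/-- The two-sided ideal generated by a set `R`, as a `ℂ`-submodule:
the span of all elements `a * r * b` with `r ∈ R`. -/
noncomputable def twoSidedSpan {F : Type*} [Semiring F] [Algebra ℂ F] (R : Set F) :
    Submodule ℂ F :=
  Submodule.span ℂ {x : F | ∃ a b : F, ∃ r ∈ R, x = a * r * b}

/-- Let `U` be a bialgebra generated by `M ⊆ U`, `F` the free algebra on
`M`, `π : F → U` the canonical projection with kernel the two-sided ideal generated by a set
`R` of defining relations, and `Δ̃` a lift of the comultiplication to `F`.  Let `φ̃ : F → C`
be the linear extension with `φ̃(1) = 1` satisfying the cocycle condition for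
`ξ̃ = ξ ∘ π`.  If `(π ⊗ φ̃)(Δ̃ r) = 0` for all `r ∈ R`, then `φ̃` vanishes on the two-sided
ideal `⟨R⟩ = ker π`, and `φ̃` factors uniquely as `φ' ∘ π` with `φ'(1) = 1` and `φ'`
satisfying the cocycle condition on `U`. -/
theorem stmt5 {U C : Type*} [Semiring U] [Bialgebra ℂ U] [Semiring C] [Algebra ℂ C]
    (M : Set U) (hgen : Algebra.adjoin ℂ M = ⊤)
    -- `π : F → U`, `F := FreeAlgebra ℂ M`:
    (π : FreeAlgebra ℂ M →ₐ[ℂ] U) (hπ : π = FreeAlgebra.lift ℂ ((↑) : M → U))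
    -- the set of defining relations: `⟨R⟩ = ker π`:
    (R : Set (FreeAlgebra ℂ M))
    (hker : ∀ x : FreeAlgebra ℂ M, π x = 0 ↔ x ∈ twoSidedSpan R)
    -- the lifted comultiplication and counit on `F`:
    (Δt : FreeAlgebra ℂ M →ₐ[ℂ] FreeAlgebra ℂ M ⊗[ℂ] FreeAlgebra ℂ M)
    (hΔt : ∀ x : FreeAlgebra ℂ M,
      TensorProduct.map π.toLinearMap π.toLinearMap (Δt x) =
        Coalgebra.comul (R := ℂ) (π x))
    -- the left `U`-module structure `ξ` on `C`:
    (ξ : U →ₗ[ℂ] C →ₗ[ℂ] C)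
    (hξone : ξ 1 = LinearMap.id)
    (hξmul : ∀ x y : U, ξ (x * y) = ξ x ∘ₗ ξ y)
    (hξunit : ∀ x : U, ξ x 1 = Coalgebra.counit (R := ℂ) x • (1 : C))
    (hξleib : ∀ (x : U) (f g : C),
      ξ x (f * g) =
        LinearMap.mul' ℂ C (TensorProduct.map (ξ.flip f) (ξ.flip g)
          (Coalgebra.comul (R := ℂ) x)))
    -- the extension `φ̃ : F → C`, satisfying the cocycle condition w.r.t. `ξ̃ := ξ ∘ π`:
    (φt : FreeAlgebra ℂ M →ₗ[ℂ] C)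
    (hφtone : φt 1 = 1)
    (hφtcoc : ∀ x y : FreeAlgebra ℂ M,
      φt (x * y) =
        LinearMap.mul' ℂ C
          (TensorProduct.map ((ξ.flip (φt y)) ∘ₗ π.toLinearMap) φt (Δt x)))
    -- the hypothesis `(π ⊗ φ̃)(Δ̃(R)) = 0`:
    (hvanish : ∀ r ∈ R, TensorProduct.map π.toLinearMap φt (Δt r) = 0) :
    (∀ x ∈ twoSidedSpan R, φt x = 0) ∧
    ∃! φ' : U →ₗ[ℂ] C,
      (∀ x : FreeAlgebra ℂ M, φt x = φ' (π x)) ∧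
      φ' 1 = 1 ∧
      (∀ x y : U, φ' (x * y) =
        LinearMap.mul' ℂ C
          (TensorProduct.map (ξ.flip (φ' y)) φ' (Coalgebra.comul (R := ℂ) x))) := by
  have hz : ∀ x ∈ twoSidedSpan R, φt x = 0 := by
    intro x hx
    unfold twoSidedSpan at hx
    induction hx using Submodule.span_induction with
    | mem x h =>
      obtain ⟨a, b, r, hr, rfl⟩ := h
      have h1 : φt (r * b) = 0 := by
        rw [hφtcoc]
        have h2 : TensorProduct.map ((ξ.flip (φt b)) ∘ₗ π.toLinearMap) φt
            = TensorProduct.map (ξ.flip (φt b)) LinearMap.id ∘ₗ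
              TensorProduct.map π.toLinearMap φt := by
          rw [← TensorProduct.map_comp, LinearMap.id_comp]
        rw [h2, LinearMap.comp_apply, hvanish r hr, map_zero, map_zero]
      rw [mul_assoc, hφtcoc, h1, map_zero, LinearMap.zero_comp, TensorProduct.map_zero_left,
        LinearMap.zero_apply, map_zero]
    | zero => exact map_zero _
    | add x y _ _ hx hy => rw [map_add, hx, hy, add_zero]
    | smul c x _ hx => rw [map_smul, hx, smul_zero]
  have hsurj : Function.Surjective π := by
    rw [← AlgHom.range_eq_top, hπ, eq_top_iff, ← hgen]
    apply Algebra.adjoin_le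
    intro m hm
    exact ⟨FreeAlgebra.ι ℂ ⟨m, hm⟩, by simp⟩
  have hwd : ∀ x y : FreeAlgebra ℂ M, π x = π y → φt x = φt y := by
    intro x y h
    have h0 : π (x + (-1 : ℂ) • y) = 0 := by
      rw [map_add, map_smul, h]
      nth_rewrite 1 [← one_smul ℂ (π y)]
      rw [← add_smul]
      simp
    have h1 := hz _ ((hker _).1 h0)
    rw [map_add, map_smul] at h1
    calc φt x = φt x + ((-1 : ℂ) • φt y + (1 : ℂ) • φt y) := by rw [← add_smul]; simp
      _ = φt y := by rw [← add_assoc, h1, zero_add, one_smul]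
  have hs : ∀ u, π (Function.surjInv hsurj u) = u := Function.surjInv_eq hsurj
  let φ' : U →ₗ[ℂ] C :=
    { toFun := fun u => φt (Function.surjInv hsurj u)
      map_add' := fun u v => by
        rw [← map_add]
        apply hwd
        rw [map_add, hs, hs, hs]
      map_smul' := fun c u => by
        rw [RingHom.id_apply, ← map_smul]
        apply hwd
        rw [map_smul, hs, hs] }
  have hφ' : ∀ x, φt x = φ' (π x) := fun x => hwd _ _ (hs (π x)).symm
  have hcomp : φt = φ' ∘ₗ π.toLinearMap := LinearMap.ext hφ'
  refine ⟨hz, φ', ⟨hφ', ?_, ?_⟩, ?_⟩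
  · rw [← map_one π, ← hφ', hφtone]
  · intro x y
    obtain ⟨a, rfl⟩ := hsurj x
    obtain ⟨b, rfl⟩ := hsurj y
    rw [← map_mul, ← hφ', ← hφ', hφtcoc, ← hΔt, ← LinearMap.comp_apply (TensorProduct.map _ φ'),
      ← TensorProduct.map_comp, ← hcomp]
  · rintro ψ ⟨h, -, -⟩
    ext u
    obtain ⟨a, rfl⟩ := hsurj u
    rw [← h, ← hφ']
end

section
/- Let φ₀ : M → C be a mapping and φ̃ : F → C its unique linear extension with φ̃(1) = 1 and φ̃(xy) = (ξ̃_{x₍₁₎} · φ̃(y)) · φ̃(x₍₂₎) for all x, y ∈ F. Suppose R satisfies the stronger coideal condition Δ̃(R) ⊆ ⟨R⟩ ⊗ F + F ⊗ F·R (where F·R is the left ideal generated by R) and that φ̃(r) = 0 for every r ∈ R. Then φ̃ vanishes on ⟨R⟩ = ker π, there exists a unique linear map φ' : U → C with φ̃ = φ' ∘ π, φ'(1) = 1, and φ' satisfies the cocycle condition φ'(xy) = (ξ_{x₍₁₎} · φ'(y)) · φ'(x₍₂₎) for all x, y ∈ U. -/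
open scoped TensorProduct

/-- The left ideal `F·R` generated by a set `R`, as a `ℂ`-submodule:
the span of all elements `a * r` with `r ∈ R`. -/
noncomputable def leftIdealSpan {F : Type*} [Semiring F] [Algebra ℂ F] (R : Set F) :
    Submodule ℂ F :=
  Submodule.span ℂ {x : F | ∃ a : F, ∃ r ∈ R, x = a * r}

/-- The subspace `⟨R⟩ ⊗ F + F ⊗ F·R` of `F ⊗ F`. -/
noncomputable def coidealBound {F : Type*} [Semiring F] [Algebra ℂ F] (R : Set F) :
    Submodule ℂ (F ⊗[ℂ] F) :=
  Submodule.span ℂ {z : F ⊗[ℂ] F | ∃ a ∈ twoSidedSpan R, ∃ b : F, z = a ⊗ₜ[ℂ] b} ⊔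
  Submodule.span ℂ {z : F ⊗[ℂ] F | ∃ a : F, ∃ b ∈ leftIdealSpan R, z = a ⊗ₜ[ℂ] b}

/-- With the same setup as Statement 5, suppose instead that `R` satisfies
the stronger coideal condition `Δ̃(R) ⊆ ⟨R⟩ ⊗ F + F ⊗ F·R` and that `φ̃(r) = 0` for all
`r ∈ R`.  Then `φ̃` vanishes on `⟨R⟩ = ker π` and factors uniquely through `π` as a map
`φ' : U → C` with `φ'(1) = 1` satisfying the cocycle condition on `U`. -/
theorem stmt6 {U C : Type*} [Semiring U] [Bialgebra ℂ U] [Semiring C] [Algebra ℂ C]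
    (M : Set U) (hgen : Algebra.adjoin ℂ M = ⊤)
    -- `π : F → U`, `F := FreeAlgebra ℂ M`:
    (π : FreeAlgebra ℂ M →ₐ[ℂ] U) (hπ : π = FreeAlgebra.lift ℂ ((↑) : M → U))
    -- the set of defining relations: `⟨R⟩ = ker π`:
    (R : Set (FreeAlgebra ℂ M))
    (hker : ∀ x : FreeAlgebra ℂ M, π x = 0 ↔ x ∈ twoSidedSpan R)
    -- the lifted comultiplication on `F`:
    (Δt : FreeAlgebra ℂ M →ₐ[ℂ] FreeAlgebra ℂ M ⊗[ℂ] FreeAlgebra ℂ M)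
    (hΔt : ∀ x : FreeAlgebra ℂ M,
      TensorProduct.map π.toLinearMap π.toLinearMap (Δt x) =
        Coalgebra.comul (R := ℂ) (π x))
    -- the left `U`-module structure `ξ` on `C`:
    (ξ : U →ₗ[ℂ] C →ₗ[ℂ] C)
    (hξone : ξ 1 = LinearMap.id)
    (hξmul : ∀ x y : U, ξ (x * y) = ξ x ∘ₗ ξ y)
    (hξunit : ∀ x : U, ξ x 1 = Coalgebra.counit (R := ℂ) x • (1 : C))
    (hξleib : ∀ (x : U) (f g : C),
      ξ x (f * g) =
        LinearMap.mul' ℂ C (TensorProduct.map (ξ.flip f) (ξ.flip g)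
          (Coalgebra.comul (R := ℂ) x)))
    -- the extension `φ̃ : F → C`, satisfying the cocycle condition w.r.t. `ξ̃ := ξ ∘ π`:
    (φt : FreeAlgebra ℂ M →ₗ[ℂ] C)
    (hφtone : φt 1 = 1)
    (hφtcoc : ∀ x y : FreeAlgebra ℂ M,
      φt (x * y) =
        LinearMap.mul' ℂ C
          (TensorProduct.map ((ξ.flip (φt y)) ∘ₗ π.toLinearMap) φt (Δt x)))
    -- the stronger coideal condition `Δ̃(R) ⊆ ⟨R⟩ ⊗ F + F ⊗ F·R`:
    (hcoideal : ∀ r ∈ R, Δt r ∈ coidealBound R)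
    -- the weaker condition `φ̃(R) = 0`:
    (hvanish : ∀ r ∈ R, φt r = 0) :
    (∀ x ∈ twoSidedSpan R, φt x = 0) ∧
    ∃! φ' : U →ₗ[ℂ] C,
      (∀ x : FreeAlgebra ℂ M, φt x = φ' (π x)) ∧
      φ' 1 = 1 ∧
      (∀ x y : U, φ' (x * y) =
        LinearMap.mul' ℂ C
          (TensorProduct.map (ξ.flip (φ' y)) φ' (Coalgebra.comul (R := ℂ) x))) := by
  have hleft : ∀ a y : FreeAlgebra ℂ M, φt y = 0 → φt (a * y) = 0 := by
    intro a y hy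
    rw [hφtcoc, hy, map_zero, LinearMap.zero_comp, TensorProduct.map_zero_left,
      LinearMap.zero_apply, map_zero]
  have hL : ∀ x ∈ leftIdealSpan R, φt x = 0 := by
    intro x hx
    unfold leftIdealSpan at hx
    induction hx using Submodule.span_induction with
    | mem x hx =>
      obtain ⟨a, r, hr, rfl⟩ := hx
      exact hleft a r (hvanish r hr)
    | zero => exact map_zero _
    | add x y _ _ hx hy => rw [map_add, hx, hy, add_zero]
    | smul c x _ hx => rw [map_smul, hx, smul_zero]
  have hrb : ∀ r ∈ R, ∀ b : FreeAlgebra ℂ M, φt (r * b) = 0 := by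
    intro r hr b
    rw [hφtcoc]
    have key : coidealBound R ≤ LinearMap.ker (LinearMap.mul' ℂ C ∘ₗ
        TensorProduct.map ((ξ.flip (φt b)) ∘ₗ π.toLinearMap) φt) := by
      unfold coidealBound
      refine sup_le (Submodule.span_le.2 ?_) (Submodule.span_le.2 ?_)
      · rintro z ⟨a, ha, c, rfl⟩
        have := (hker a).2 ha
        simp [this]
      · rintro z ⟨a, c, hc, rfl⟩
        have := hL c hc
        simp [this]
    exact LinearMap.mem_ker.1 (key (hcoideal r hr))
  have hv : ∀ x ∈ twoSidedSpan R, φt x = 0 := by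
    intro x hx
    unfold twoSidedSpan at hx
    induction hx using Submodule.span_induction with
    | mem x hx =>
      obtain ⟨a, b, r, hr, rfl⟩ := hx
      rw [mul_assoc]
      exact hleft a _ (hrb r hr b)
    | zero => exact map_zero _
    | add x y _ _ hx hy => rw [map_add, hx, hy, add_zero]
    | smul c x _ hx => rw [map_smul, hx, smul_zero]
  refine ⟨hv, ?_⟩
  have hsurj : Function.Surjective π := by
    rw [← AlgHom.range_eq_top, hπ, ← top_le_iff, ← hgen]
    refine Algebra.adjoin_le ?_
    intro m hm
    exact ⟨FreeAlgebra.ι ℂ ⟨m, hm⟩, by simp⟩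
  have hcanc : ∀ {V : Type _} [AddCommMonoid V] [Module ℂ V] (v : V),
      v + (-1 : ℂ) • v = 0 := by
    intro V _ _ v
    have : ((1 : ℂ) + (-1)) • v = 0 := by simp
    rwa [add_smul, one_smul] at this
  have hcanc' : ∀ v : C, v + (-1 : ℂ) • v = 0 := by
    intro v
    have : ((1 : ℂ) + (-1)) • v = 0 := by simp
    rwa [add_smul, one_smul] at this
  have hwd : ∀ x y : FreeAlgebra ℂ M, π x = π y → φt x = φt y := by
    intro x y h
    have h1 : π (x + (-1 : ℂ) • y) = 0 := by
      rw [map_add, map_smul, h]; exact hcanc _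
    have h2 := hv _ ((hker _).1 h1)
    rw [map_add, map_smul] at h2
    have h3 := hcanc' (φt y)
    calc φt x = φt x + (φt y + (-1 : ℂ) • φt y) := by rw [h3, add_zero]
      _ = φt y + (φt x + (-1 : ℂ) • φt y) := by rw [add_left_comm]
      _ = φt y := by rw [h2, add_zero]
  choose s hs using hsurj
  let φ' : U →ₗ[ℂ] C :=
    { toFun := fun u => φt (s u)
      map_add' := fun u v => by
        rw [← map_add]; exact hwd _ _ (by rw [map_add, hs, hs, hs])
      map_smul' := fun c u => by
        rw [RingHom.id_apply, ← map_smul]; exact hwd _ _ (by rw [map_smul, hs, hs]) }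
  have hφ' : ∀ x, φt x = φ' (π x) := fun x => hwd _ _ (hs _).symm
  have hcomp : φt = φ' ∘ₗ π.toLinearMap := LinearMap.ext hφ'
  refine ⟨φ', ⟨hφ', ?_, ?_⟩, ?_⟩
  · rw [← map_one π, ← hφ', hφtone]
  · intro x y
    rw [← hs x, ← hs y, ← map_mul, ← hφ', ← hφ', hφtcoc, ← hΔt]
    conv_lhs => rw [show TensorProduct.map (ξ.flip (φt (s y)) ∘ₗ π.toLinearMap) φt =
      TensorProduct.map (ξ.flip (φt (s y))) φ' ∘ₗ
        TensorProduct.map π.toLinearMap π.toLinearMap by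
          rw [← TensorProduct.map_comp, ← hcomp]]
    rfl
  · rintro ψ ⟨hψ, -, -⟩
    ext u
    rw [← hs u, ← hψ, ← hφ']
end
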